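/- (Euler characteristic of the link of a face.) Let H be a central essential arrangement in a finite-dimensional real vector space V with n = dim V. Then for every face A of H: Σ_{B} (−1)^{n − dim B} = 1, the sum ranging over the finitely many faces B of H with A ≤ B (including B = A); equivalently, Σ_{B ≥ A} (−1)^{dim B} = (−1)^n. -/

import Mathlib

/-! Basic notions for a (central, essential) arrangement of hyperplanes `H`
in a finite-dimensional real vector space, its faces, flats, the dual
arrangement and its faces, and the big/small dual cones. -/

/-- Two points `x`, `y` lie in the same face of the hyperplane arrangement `H`:
for every hyperplane `W ∈ H` and every linear functional `f` with kernel `W`,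
either `f x · f y > 0` or `f x = f y = 0`. -/
def SameFace {V : Type*} [AddCommGroup V] [Module ℝ V]
    (H : Finset (Submodule ℝ V)) (x y : V) : Prop :=
  ∀ W ∈ H, ∀ f : V →ₗ[ℝ] ℝ, LinearMap.ker f = W →
    (0 < f x * f y ∨ (f x = 0 ∧ f y = 0))

/-- A face of the arrangement `H`: an equivalence class of the relation `SameFace`. -/
def IsFace {V : Type*} [AddCommGroup V] [Module ℝ V]
    (H : Finset (Submodule ℝ V)) (A : Set V) : Prop :=
  ∃ x : V, A = {y | SameFace H x y}

/-- A chamber is an open face. -/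
def IsChamber {V : Type*} [AddCommGroup V] [Module ℝ V] [TopologicalSpace V]
    (H : Finset (Submodule ℝ V)) (A : Set V) : Prop :=
  IsFace H A ∧ IsOpen A

/-- A flat of `H`: an intersection of a subfamily of the hyperplanes
(the empty subfamily gives all of `V`). -/
def IsFlat {V : Type*} [AddCommGroup V] [Module ℝ V]
    (H : Finset (Submodule ℝ V)) (L : Submodule ℝ V) : Prop :=
  ∃ J : Finset (Submodule ℝ V), J ⊆ H ∧ L = J.inf id

/-- Two (continuous) linear functionals `f`, `g` lie in the same face of the dual
arrangement `H∨`: for every 1-dimensional flat `l` of `H` and every `x ∈ l`,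
either `f x · g x > 0` or `f x = g x = 0`. -/
def DualSameFace {V : Type*} [NormedAddCommGroup V] [NormedSpace ℝ V]
    (H : Finset (Submodule ℝ V)) (f g : V →L[ℝ] ℝ) : Prop :=
  ∀ l : Submodule ℝ V, IsFlat H l → Module.finrank ℝ l = 1 →
    ∀ x ∈ l, (0 < f x * g x ∨ (f x = 0 ∧ g x = 0))

/-- A face of the dual arrangement `H∨` in the dual space. -/
def IsDualFace {V : Type*} [NormedAddCommGroup V] [NormedSpace ℝ V]
    (H : Finset (Submodule ℝ V)) (A : Set (V →L[ℝ] ℝ)) : Prop :=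
  ∃ f : V →L[ℝ] ℝ, A = {g | DualSameFace H f g}

/-- A chamber of the dual arrangement: an open dual face. -/
def IsDualChamber {V : Type*} [NormedAddCommGroup V] [NormedSpace ℝ V]
    (H : Finset (Submodule ℝ V)) (A : Set (V →L[ℝ] ℝ)) : Prop :=
  IsDualFace H A ∧ IsOpen A

/-- The big dual cone `U(A∨)` of a dual face `A∨`. -/
def bigCone {V : Type*} [NormedAddCommGroup V] [NormedSpace ℝ V]
    (A : Set (V →L[ℝ] ℝ)) : Set V :=
  {x | ∀ f ∈ A, 0 ≤ f x}

/-- The small dual cone `V(A∨)` of a dual face `A∨`: the intersection of the big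
dual cones of all dual chambers `B∨` with `A∨ ≤ B∨`. -/
def smallCone {V : Type*} [NormedAddCommGroup V] [NormedSpace ℝ V]
    (H : Finset (Submodule ℝ V)) (A : Set (V →L[ℝ] ℝ)) : Set V :=
  ⋂ B ∈ {B : Set (V →L[ℝ] ℝ) | IsDualChamber H B ∧ A ⊆ closure B}, bigCone B

/-!
The function `C ↦ (-1) ^ dim C` (and `∅ ↦ 0`) on relatively open convex sets is the Euler
characteristic with compact support. It is additive under cutting by a hyperplane `f = 0`: if the
hyperplane meets `C` properly, both open sides are nonempty of dimension `dim C` and the slice has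
dimension `dim C - 1`; otherwise `C` is one of the three pieces. Hence it is additive under cutting
by a finite arrangement. The faces `B ≥ A` are exactly the cells of the star of `A`, the set of
points lying strictly on the same side as `A` of every hyperplane not containing `A`. The star is
open, convex and nonempty, so the sum of `(-1) ^ dim B` over these faces is `(-1) ^ dim V`.
-/

open Module Set

theorem neg_one_pow_sub {R : Type*} [Monoid R] [HasDistribNeg R] {m n : ℕ} (h : m ≤ n) :
    (-1 : R) ^ (n - m) = (-1) ^ n * (-1) ^ m := by
  rw [← pow_add, neg_one_pow_congr ((Nat.even_sub h).trans Nat.even_add.symm)]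

section Sign

section OrderedRing

variable {R : Type*} [Ring R] [LinearOrder R] [IsStrictOrderedRing R]

theorem mul_pos_or_eq_zero_iff_sign_eq (a b : R) :
    (0 < a * b ∨ (a = 0 ∧ b = 0)) ↔ SignType.sign a = SignType.sign b := by
  rcases lt_trichotomy a 0 with ha | rfl | ha <;> rcases lt_trichotomy b 0 with hb | rfl | hb <;>
    simp [*, mul_pos_of_neg_of_neg, le_of_lt, ne_of_gt, ne_of_lt]

theorem sign_add_mul_of_pos {a b t : R} (ht : 0 < t)
    (h : SignType.sign a ≠ 0 → SignType.sign b = SignType.sign a) :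
    SignType.sign (a + t * b) = SignType.sign b := by
  rcases lt_trichotomy a 0 with ha | rfl | ha
  · have hb : b < 0 := by simpa [sign_neg ha, sign_eq_neg_one_iff] using h
    rw [sign_neg hb, sign_neg (add_neg ha (mul_neg_of_pos_of_neg ht hb))]
  · simp [sign_mul, sign_pos ht]
  · have hb : 0 < b := by simpa [sign_pos ha, sign_eq_one_iff] using h
    rw [sign_pos hb, sign_pos (by positivity)]

end OrderedRing

theorem isOpen_sign_preimage_singleton {α : Type*} [Zero α] [LinearOrder α] [TopologicalSpace α]
    [OrderTopology α] {s : SignType} (hs : s ≠ 0) : IsOpen (SignType.sign ⁻¹' {s} : Set α) := by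
  refine isOpen_iff_mem_nhds.2 fun a ha => ?_
  have ha0 : a ≠ 0 := sign_ne_zero.1 (by rwa [show SignType.sign a = s from ha])
  exact (continuousAt_sign_of_ne_zero ha0).preimage_mem_nhds ((isOpen_discrete {s}).mem_nhds ha)

theorem convex_sign_preimage_singleton {K : Type*} [Field K] [LinearOrder K] [IsStrictOrderedRing K]
    (s : SignType) : Convex K (SignType.sign ⁻¹' {s} : Set K) :=
  (ordConnected_singleton.preimage_mono SignType.sign.monotone).convex

theorem mem_iff_exists_lt_and_exists_gt_of_isOpen {α : Type*} [LinearOrder α] [TopologicalSpace α]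
    [OrderTopology α] [DenselyOrdered α] [NoMinOrder α] [NoMaxOrder α] {I : Set α}
    (hI : IsOpen I) (hc : I.OrdConnected) (a : α) :
    a ∈ I ↔ (∃ y ∈ I, y < a) ∧ ∃ y ∈ I, a < y := by
  refine ⟨fun ha => ?_, fun ⟨⟨y, hy, hya⟩, z, hz, haz⟩ => hc.out hy hz ⟨hya.le, haz.le⟩⟩
  have hnhds : ∀ᶠ y in nhds a, y ∈ I := hI.mem_nhds ha
  obtain ⟨y, hya, hy⟩ := hnhds.exists_lt
  obtain ⟨z, haz, hz⟩ := hnhds.exists_gt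
  exact ⟨⟨y, hy, hya⟩, z, hz, haz⟩

theorem sum_signType {M : Type*} [AddCommMonoid M] (g : SignType → M) :
    ∑ s, g s = g 0 + (g (-1) + g 1) := by
  rw [SignType.univ_eq, Finset.sum_insert (by decide), Finset.sum_pair (by decide)]

end Sign

section LinearFunctional

variable {K V : Type*} [Field K] [AddCommGroup V] [Module K V]

theorem sign_apply_eq_of_ker_eq [LinearOrder K] [IsStrictOrderedRing K] {f g : V →ₗ[K] K}
    (hker : LinearMap.ker f = LinearMap.ker g) {x y : V}
    (h : SignType.sign (f x) = SignType.sign (f y)) :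
    SignType.sign (g x) = SignType.sign (g y) := by
  have hmem : g ∈ Submodule.span K (Set.range fun _ : Unit => f) :=
    mem_span_of_iInf_ker_le_ker (by simp [hker])
  obtain ⟨c, rfl⟩ : ∃ c : K, c • f = g := by
    simpa [Submodule.mem_span_singleton] using hmem
  simp [sign_mul, h]

theorem domRestrict_ne_zero_of_not_le_ker {L : Submodule K V} {f : V →ₗ[K] K}
    (hf : ¬ L ≤ LinearMap.ker f) : f.domRestrict L ≠ 0 :=
  fun h => hf fun y hy => LinearMap.congr_fun h ⟨y, hy⟩

theorem finrank_inf_ker_add_one {L : Submodule K V} [FiniteDimensional K L] {f : V →ₗ[K] K}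
    (hf : ¬ L ≤ LinearMap.ker f) :
    finrank K (L ⊓ LinearMap.ker f : Submodule K V) + 1 = finrank K L := by
  rw [← Module.Dual.finrank_ker_add_one_of_ne_zero (domRestrict_ne_zero_of_not_le_ker hf),
    ← Submodule.finrank_map_subtype_eq L, LinearMap.ker_domRestrict, Submodule.map_comap_subtype]

end LinearFunctional

section EulerWeight

variable {V : Type*} [AddCommGroup V] [Module ℝ V]

open Classical in
/-- The Euler characteristic with compact support of a relatively open convex set `C`: it is
`(-1) ^ dim C`, and `0` for the empty set. The dimension is that of the linear span, which is the
affine dimension only for sets that are relatively open in a linear subspace. -/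
noncomputable def eulerWeight (C : Set V) : ℤ :=
  if C.Nonempty then (-1) ^ finrank ℝ (Submodule.span ℝ C) else 0

theorem eulerWeight_of_nonempty {C : Set V} (hC : C.Nonempty) :
    eulerWeight C = (-1) ^ finrank ℝ (Submodule.span ℝ C) :=
  if_pos hC

@[simp]
theorem eulerWeight_empty : eulerWeight (∅ : Set V) = 0 :=
  if_neg Set.not_nonempty_empty

theorem inter_inter_sign_eq {U : Set V} {L : Submodule ℝ V} {f : V →ₗ[ℝ] ℝ} {s : SignType} :
    U ∩ L ∩ {x | SignType.sign (f x) = s} = U ∩ f ⁻¹' (SignType.sign ⁻¹' {s}) ∩ L := by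
  rw [inter_right_comm]; rfl

theorem inter_inter_sign_eq_zero {U : Set V} {L : Submodule ℝ V} {f : V →ₗ[ℝ] ℝ} :
    U ∩ L ∩ {x | SignType.sign (f x) = 0} = U ∩ (L ⊓ LinearMap.ker f : Submodule ℝ V) := by
  ext x; simp [and_assoc]

variable [TopologicalSpace V]

/-- Convex sets that are relatively open in some *linear* subspace `L`, encoded as the trace on `L`
of an open convex subset of the ambient space. -/
def IsRelOpenConvex (C : Set V) : Prop :=
  ∃ (U : Set V) (L : Submodule ℝ V), IsOpen U ∧ Convex ℝ U ∧ U ∩ L = C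

theorem IsRelOpenConvex.of_isOpen {U : Set V} (hU : IsOpen U) (hc : Convex ℝ U) :
    IsRelOpenConvex U :=
  ⟨U, ⊤, hU, hc, by simp⟩

variable [IsTopologicalAddGroup V] [ContinuousSMul ℝ V]

theorem span_inter_of_isOpen {U : Set V} (hU : IsOpen U) {L : Submodule ℝ V}
    (hne : (U ∩ L).Nonempty) : Submodule.span ℝ (U ∩ L) = L := by
  have hspan : Submodule.span ℝ (L.subtype ⁻¹' U) = ⊤ := by
    obtain ⟨x, hxU, hxL⟩ := hne
    exact Submodule.eq_top_of_nonempty_interior' _ ⟨⟨x, hxL⟩, interior_maximal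
      Submodule.subset_span (hU.preimage continuous_subtype_val) hxU⟩
  have himage : L.subtype '' (L.subtype ⁻¹' U) = U ∩ L := by simp [image_preimage_eq_inter_range]
  rw [← himage, ← Submodule.map_span, hspan, Submodule.map_subtype_top]

open Classical in
theorem eulerWeight_inter_of_isOpen {U : Set V} (hU : IsOpen U) (L : Submodule ℝ V) :
    eulerWeight (U ∩ L) = if (U ∩ L).Nonempty then (-1) ^ finrank ℝ L else 0 := by
  split_ifs with hne
  · rw [eulerWeight_of_nonempty hne, span_inter_of_isOpen hU hne]
  · rw [not_nonempty_iff_eq_empty.1 hne, eulerWeight_empty]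

theorem eulerWeight_of_isOpen {U : Set V} (hU : IsOpen U) (hne : U.Nonempty) :
    eulerWeight U = (-1) ^ finrank ℝ V := by
  simpa [hne] using eulerWeight_inter_of_isOpen hU (⊤ : Submodule ℝ V)

theorem isOpen_image_inter {U : Set V} (hU : IsOpen U) {L : Submodule ℝ V} {f : V →ₗ[ℝ] ℝ}
    (hf : ¬ L ≤ LinearMap.ker f) : IsOpen (f '' (U ∩ L)) := by
  have himage : f '' (U ∩ L) = f.domRestrict L '' (L.subtype ⁻¹' U) := by
    ext; simp [and_assoc]
  rw [himage]
  exact (f.domRestrict L).isOpenMap_of_finiteDimensional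
    (LinearMap.surjective (domRestrict_ne_zero_of_not_le_ker hf)) _
    (hU.preimage continuous_subtype_val)

theorem nonempty_sign_eq_zero_iff {U : Set V} (hU : IsOpen U) (hc : Convex ℝ U)
    {L : Submodule ℝ V} {f : V →ₗ[ℝ] ℝ} (hf : ¬ L ≤ LinearMap.ker f) :
    (U ∩ L ∩ {x | SignType.sign (f x) = 0}).Nonempty ↔
      (U ∩ L ∩ {x | SignType.sign (f x) = -1}).Nonempty ∧
        (U ∩ L ∩ {x | SignType.sign (f x) = 1}).Nonempty := by
  -- The image of `U ∩ L` under `f` is an open interval: it contains `0` iff it takes both signs.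
  have hord : (f '' (U ∩ L)).OrdConnected :=
    ((hc.inter L.convex).linear_image f).ordConnected
  simpa [Set.Nonempty, sign_eq_one_iff, sign_eq_neg_one_iff, and_assoc] using
    mem_iff_exists_lt_and_exists_gt_of_isOpen (isOpen_image_inter hU hf) hord 0

theorem nonempty_iff_nonempty_sign_ne_zero {U : Set V} (hU : IsOpen U) (hc : Convex ℝ U)
    {L : Submodule ℝ V} {f : V →ₗ[ℝ] ℝ} (hf : ¬ L ≤ LinearMap.ker f) :
    (U ∩ L : Set V).Nonempty ↔
      (U ∩ L ∩ {x | SignType.sign (f x) = -1}).Nonempty ∨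
        (U ∩ L ∩ {x | SignType.sign (f x) = 1}).Nonempty := by
  refine ⟨fun ⟨x, hx⟩ => ?_, fun hne => hne.elim (·.left) (·.left)⟩
  rcases (SignType.sign (f x)).trichotomy with hneg | hzero | hpos
  · exact .inl ⟨x, hx, hneg⟩
  · exact .inl ((nonempty_sign_eq_zero_iff hU hc hf).1 ⟨x, hx, hzero⟩).1
  · exact .inr ⟨x, hx, hpos⟩

open Classical in
theorem eulerWeight_inter_sign_eq_zero {U : Set V} (hU : IsOpen U) {L : Submodule ℝ V}
    [FiniteDimensional ℝ L] {f : V →ₗ[ℝ] ℝ} (hf : ¬ L ≤ LinearMap.ker f) :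
    eulerWeight (U ∩ L ∩ {x | SignType.sign (f x) = 0}) =
      if (U ∩ L ∩ {x | SignType.sign (f x) = 0}).Nonempty then -(-1) ^ finrank ℝ L else 0 := by
  rw [inter_inter_sign_eq_zero, eulerWeight_inter_of_isOpen hU, ← finrank_inf_ker_add_one hf,
    pow_succ, mul_neg_one, neg_neg]

variable [FiniteDimensional ℝ V] [T2Space V]

theorem isOpen_inter_sign_preimage {U : Set V} (hU : IsOpen U) (f : V →ₗ[ℝ] ℝ) {s : SignType}
    (hs : s ≠ 0) : IsOpen (U ∩ f ⁻¹' (SignType.sign ⁻¹' {s})) :=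
  hU.inter ((isOpen_sign_preimage_singleton hs).preimage f.continuous_of_finiteDimensional)

theorem IsRelOpenConvex.inter_sign {C : Set V} (hC : IsRelOpenConvex C) (f : V →ₗ[ℝ] ℝ)
    (s : SignType) : IsRelOpenConvex (C ∩ {x | SignType.sign (f x) = s}) := by
  obtain ⟨U, L, hU, hc, rfl⟩ := hC
  rcases eq_or_ne s 0 with rfl | hs
  · exact ⟨U, L ⊓ LinearMap.ker f, hU, hc, inter_inter_sign_eq_zero.symm⟩
  · exact ⟨_, L, isOpen_inter_sign_preimage hU f hs,
      hc.inter ((convex_sign_preimage_singleton s).linear_preimage f),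
      inter_inter_sign_eq.symm⟩

open Classical in
theorem eulerWeight_inter_sign_of_ne_zero {U : Set V} (hU : IsOpen U) (L : Submodule ℝ V)
    (f : V →ₗ[ℝ] ℝ) {s : SignType} (hs : s ≠ 0) :
    eulerWeight (U ∩ L ∩ {x | SignType.sign (f x) = s}) =
      if (U ∩ L ∩ {x | SignType.sign (f x) = s}).Nonempty then (-1) ^ finrank ℝ L else 0 := by
  rw [inter_inter_sign_eq, eulerWeight_inter_of_isOpen (isOpen_inter_sign_preimage hU f hs)]

theorem IsRelOpenConvex.sum_eulerWeight_inter_sign {C : Set V} (hC : IsRelOpenConvex C)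
    (f : V →ₗ[ℝ] ℝ) :
    ∑ s, eulerWeight (C ∩ {x | SignType.sign (f x) = s}) = eulerWeight C := by
  classical
  obtain ⟨U, L, hU, hc, rfl⟩ := hC
  by_cases hf : L ≤ LinearMap.ker f
  · have hsign : ∀ x ∈ U ∩ L, SignType.sign (f x) = 0 := fun x hx =>
      sign_eq_zero_iff.2 (hf hx.2)
    have hempty : ∀ s ≠ 0, U ∩ L ∩ {x | SignType.sign (f x) = s} = ∅ := fun s hs =>
      eq_empty_of_forall_notMem fun x hx => hs (hx.2.symm.trans (hsign x hx.1))
    have hfull : U ∩ L ∩ {x | SignType.sign (f x) = 0} = U ∩ L := inter_eq_left.2 hsign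
    rw [Fintype.sum_eq_single 0 fun s hs => by rw [hempty s hs, eulerWeight_empty], hfull]
  · rw [sum_signType, eulerWeight_inter_sign_eq_zero hU hf,
      eulerWeight_inter_sign_of_ne_zero hU L f (by decide),
      eulerWeight_inter_sign_of_ne_zero hU L f (by decide), eulerWeight_inter_of_isOpen hU]
    simp only [nonempty_sign_eq_zero_iff hU hc hf, nonempty_iff_nonempty_sign_ne_zero hU hc hf]
    by_cases hneg : (U ∩ L ∩ {x | SignType.sign (f x) = -1}).Nonempty <;>
      by_cases hpos : (U ∩ L ∩ {x | SignType.sign (f x) = 1}).Nonempty <;>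
      simp [hneg, hpos]

end EulerWeight

section SignVector

variable {ι V : Type*} [AddCommGroup V] [Module ℝ V]

/-- The sign vector (covector) of a point with respect to a family of linear functionals. Its
fibres are the faces of the arrangement formed by the kernels. -/
noncomputable def signVector (φ : ι → V →ₗ[ℝ] ℝ) (x : V) : ι → SignType :=
  fun i => SignType.sign (φ i x)

/-- The star of the face with sign vector `σ`: the union of the faces having it in their
closure. -/
def openStar (φ : ι → V →ₗ[ℝ] ℝ) (σ : ι → SignType) : Set V :=
  {x | ∀ i, σ i ≠ 0 → signVector φ x i = σ i}

theorem mem_openStar_signVector (φ : ι → V →ₗ[ℝ] ℝ) (x : V) : x ∈ openStar φ (signVector φ x) :=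
  fun _ _ => rfl

theorem openStar_eq_iInter (φ : ι → V →ₗ[ℝ] ℝ) (σ : ι → SignType) :
    openStar φ σ = ⋂ (i) (_ : σ i ≠ 0), φ i ⁻¹' (SignType.sign ⁻¹' {σ i}) := by
  ext x; simp [openStar, signVector]

theorem convex_openStar (φ : ι → V →ₗ[ℝ] ℝ) (σ : ι → SignType) : Convex ℝ (openStar φ σ) := by
  rw [openStar_eq_iInter]
  exact convex_iInter₂ fun i _ => (convex_sign_preimage_singleton (σ i)).linear_preimage (φ i)

theorem signVector_add_smul {φ : ι → V →ₗ[ℝ] ℝ} {x y : V} (hy : y ∈ openStar φ (signVector φ x))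
    {t : ℝ} (ht : 0 < t) : signVector φ (x + t • y) = signVector φ y := by
  funext i
  simpa [signVector] using sign_add_mul_of_pos ht (hy i)

theorem openStar_inter_signVector_fiber_of_mem {φ : ι → V →ₗ[ℝ] ℝ} {σ : ι → SignType} {y : V}
    (hy : y ∈ openStar φ σ) :
    openStar φ σ ∩ signVector φ ⁻¹' {signVector φ y} = signVector φ ⁻¹' {signVector φ y} := by
  refine inter_eq_right.2 fun z (hz : signVector φ z = signVector φ y) i hi => ?_
  rw [hz, hy i hi]

variable [TopologicalSpace V] [IsTopologicalAddGroup V] [ContinuousSMul ℝ V]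

theorem mem_closure_signVector_fiber {φ : ι → V →ₗ[ℝ] ℝ} {x y : V}
    (hy : y ∈ openStar φ (signVector φ x)) : x ∈ closure (signVector φ ⁻¹' {signVector φ y}) := by
  have hcont : Continuous fun t : ℝ => x + t • y := by fun_prop
  have hlim : Filter.Tendsto (fun t : ℝ => x + t • y) (nhdsWithin 0 (Ioi 0)) (nhds x) := by
    simpa using (hcont.tendsto 0).mono_left nhdsWithin_le_nhds
  refine mem_closure_of_tendsto hlim ?_
  filter_upwards [self_mem_nhdsWithin] with t ht using signVector_add_smul hy ht

variable [FiniteDimensional ℝ V] [T2Space V]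

theorem isOpen_openStar [Finite ι] (φ : ι → V →ₗ[ℝ] ℝ) (σ : ι → SignType) :
    IsOpen (openStar φ σ) := by
  rw [openStar_eq_iInter]
  exact isOpen_iInter_of_finite fun i => isOpen_iInter_of_finite fun hi =>
    (isOpen_sign_preimage_singleton hi).preimage (φ i).continuous_of_finiteDimensional

theorem signVector_fiber_subset_closure_iff [Finite ι] (φ : ι → V →ₗ[ℝ] ℝ) (x y : V) :
    signVector φ ⁻¹' {signVector φ x} ⊆ closure (signVector φ ⁻¹' {signVector φ y}) ↔
      y ∈ openStar φ (signVector φ x) := by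
  constructor
  · intro hsub i hi
    obtain ⟨z, hz, hzy : signVector φ z = signVector φ y⟩ :=
      mem_closure_iff.1 (hsub rfl) _ (isOpen_openStar φ _) (mem_openStar_signVector φ x)
    rw [← hzy, hz i hi]
  · intro hy z (hz : signVector φ z = signVector φ x)
    exact mem_closure_signVector_fiber (by rwa [hz])

theorem IsRelOpenConvex.sum_eulerWeight_inter_signVector_fiber_fin {k : ℕ}
    (φ : Fin k → V →ₗ[ℝ] ℝ) {C : Set V} (hC : IsRelOpenConvex C) :
    ∑ σ, eulerWeight (C ∩ signVector φ ⁻¹' {σ}) = eulerWeight C := by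
  induction k generalizing C with
  | zero =>
    have hfiber (σ) : signVector φ ⁻¹' {σ} = univ :=
      eq_univ_of_forall fun _ => Subsingleton.elim _ _
    simp [hfiber]
  | succ k ih =>
    rw [← (Fin.consEquiv fun _ => SignType).sum_comp, Fintype.sum_prod_type,
      ← hC.sum_eulerWeight_inter_sign (φ 0)]
    refine Fintype.sum_congr _ _ fun s => ?_
    rw [← ih (Fin.tail φ) (hC.inter_sign (φ 0) s)]
    refine Fintype.sum_congr _ _ fun σ => congrArg eulerWeight ?_
    ext x
    simp [signVector, funext_iff, Fin.forall_fin_succ, Fin.consEquiv, Fin.tail, and_assoc]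

theorem IsRelOpenConvex.sum_eulerWeight_inter_signVector_fiber [Fintype ι] [DecidableEq ι]
    (φ : ι → V →ₗ[ℝ] ℝ) {C : Set V} (hC : IsRelOpenConvex C) :
    ∑ σ, eulerWeight (C ∩ signVector φ ⁻¹' {σ}) = eulerWeight C := by
  let e := Fintype.equivFin ι
  rw [← hC.sum_eulerWeight_inter_signVector_fiber_fin (φ ∘ e.symm)]
  refine Fintype.sum_equiv (e.arrowCongr (Equiv.refl _)) _ _ fun σ => congrArg eulerWeight ?_
  ext x
  simp [signVector, funext_iff, e.forall_congr_left]

theorem IsRelOpenConvex.sum_neg_one_pow_finrank_span [Finite ι] (φ : ι → V →ₗ[ℝ] ℝ) {C : Set V}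
    (hC : IsRelOpenConvex C) {F : Finset (Set V)}
    (hF : ∀ B, B ∈ F ↔ B.Nonempty ∧ ∃ σ, C ∩ signVector φ ⁻¹' {σ} = B) :
    ∑ B ∈ F, (-1) ^ finrank ℝ (Submodule.span ℝ B) = eulerWeight C := by
  classical
  have := Fintype.ofFinite ι
  have hF_eq : F = (Finset.univ.image fun σ => C ∩ signVector φ ⁻¹' {σ}).erase ∅ := by
    ext B
    simp [hF, nonempty_iff_ne_empty]
  have hdisj : (univ : Set (ι → SignType)).PairwiseDisjoint fun σ => C ∩ signVector φ ⁻¹' {σ} :=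
    (pairwiseDisjoint_fiber (signVector φ) univ).mono fun _ => inter_subset_right
  calc ∑ B ∈ F, (-1) ^ finrank ℝ (Submodule.span ℝ B)
      = ∑ B ∈ F, eulerWeight B :=
        Finset.sum_congr rfl fun B hB => (eulerWeight_of_nonempty ((hF B).1 hB).1).symm
    _ = ∑ σ, eulerWeight (C ∩ signVector φ ⁻¹' {σ}) := by
        rw [hF_eq, Finset.sum_erase _ eulerWeight_empty,
          Finset.sum_image_of_disjoint eulerWeight_empty (by simpa using hdisj)]
    _ = eulerWeight C := hC.sum_eulerWeight_inter_signVector_fiber φ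

end SignVector

section Arrangement

variable {V : Type*} [AddCommGroup V] [Module ℝ V] {H : Finset (Submodule ℝ V)}
  {φ : H → V →ₗ[ℝ] ℝ}

theorem sameFace_iff_signVector_eq (hφ : ∀ W, LinearMap.ker (φ W) = W) {x y : V} :
    SameFace H x y ↔ signVector φ x = signVector φ y := by
  simp only [SameFace, mul_pos_or_eq_zero_iff_sign_eq, funext_iff, Subtype.forall]
  exact ⟨fun h W hW => h W hW _ (hφ ⟨W, hW⟩), fun h W hW f hf =>
    sign_apply_eq_of_ker_eq ((hφ ⟨W, hW⟩).trans hf.symm) (h W hW)⟩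

theorem setOf_sameFace_eq (hφ : ∀ W, LinearMap.ker (φ W) = W) (x : V) :
    {y | SameFace H x y} = signVector φ ⁻¹' {signVector φ x} := by
  ext y
  exact (sameFace_iff_signVector_eq hφ).trans eq_comm

theorem isFace_and_subset_closure_iff [TopologicalSpace V] [IsTopologicalAddGroup V]
    [ContinuousSMul ℝ V] [FiniteDimensional ℝ V] [T2Space V]
    (hφ : ∀ W, LinearMap.ker (φ W) = W) (x : V) (B : Set V) :
    IsFace H B ∧ signVector φ ⁻¹' {signVector φ x} ⊆ closure B ↔
      B.Nonempty ∧ ∃ σ, openStar φ (signVector φ x) ∩ signVector φ ⁻¹' {σ} = B := by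
  simp only [IsFace, setOf_sameFace_eq hφ]
  constructor
  · rintro ⟨⟨y, rfl⟩, hsub⟩
    have hy := (signVector_fiber_subset_closure_iff φ x y).1 hsub
    exact ⟨⟨y, rfl⟩, _, openStar_inter_signVector_fiber_of_mem hy⟩
  · rintro ⟨⟨y, hyB⟩, σ, rfl⟩
    obtain ⟨hy, rfl : signVector φ y = σ⟩ := hyB
    rw [openStar_inter_signVector_fiber_of_mem hy]
    exact ⟨⟨y, rfl⟩, (signVector_fiber_subset_closure_iff φ x y).2 hy⟩

end Arrangement

theorem statement13_general {V : Type*} [AddCommGroup V] [Module ℝ V] [TopologicalSpace V]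
    [IsTopologicalAddGroup V] [ContinuousSMul ℝ V] [T2Space V]
    [FiniteDimensional ℝ V] (H : Finset (Submodule ℝ V))
    (hHyp : ∀ W ∈ H, ∃ f : V →ₗ[ℝ] ℝ, LinearMap.ker f = W)
    (A : Set V) (hA : IsFace H A)
    (F : Finset (Set V))
    (hF : ∀ B : Set V, B ∈ F ↔ IsFace H B ∧ A ⊆ closure B) :
    ∑ B ∈ F,
      (-1 : ℤ) ^ (Module.finrank ℝ V - Module.finrank ℝ (Submodule.span ℝ B)) = 1 := by
  choose φ hφ using fun W : H => hHyp W W.2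
  obtain ⟨a, rfl⟩ := hA
  rw [setOf_sameFace_eq hφ] at hF
  have hopen := isOpen_openStar φ (signVector φ a)
  have hsum := (IsRelOpenConvex.of_isOpen hopen (convex_openStar φ _)).sum_neg_one_pow_finrank_span
    φ fun B => (hF B).trans (isFace_and_subset_closure_iff hφ a B)
  have hstar := eulerWeight_of_isOpen hopen ⟨a, mem_openStar_signVector φ a⟩
  simp only [neg_one_pow_sub (Submodule.finrank_le _)]
  rw [← Finset.mul_sum, hsum, hstar, ← mul_pow]
  simp

/-- Euler characteristic of the link of a face: for every face `A`
of a central essential arrangement `H` in an `n`-dimensional space,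
`Σ_{B ≥ A} (−1)^{n − dim B} = 1`. -/
theorem statement13 {V : Type*} [NormedAddCommGroup V] [NormedSpace ℝ V]
    [FiniteDimensional ℝ V] (H : Finset (Submodule ℝ V))
    (hHyp : ∀ W ∈ H, ∃ f : V →ₗ[ℝ] ℝ, f ≠ 0 ∧ LinearMap.ker f = W)
    (hEss : (⋂ W ∈ H, (W : Set V)) = {0})
    (A : Set V) (hA : IsFace H A)
    (F : Finset (Set V))
    (hF : ∀ B : Set V, B ∈ F ↔ IsFace H B ∧ A ⊆ closure B) :
    ∑ B ∈ F,
      (-1 : ℤ) ^ (Module.finrank ℝ V - Module.finrank ℝ (Submodule.span ℝ B)) = 1 :=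
  statement13_general H (fun W hW => (hHyp W hW).imp fun _ => And.right) A hA F hF
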